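/- Let α be an irrational real number and R_α : 𝕊¹ → 𝕊¹ the rotation R_α(x) = x + α. Then the Cesàro averages of pushforwards converge to Lebesgue measure in the W distance uniformly over all Borel probability measures: sup_{μ} W(m, (1/n) Σ_{i=1}^{n} (R_α^i)_*μ) → 0 as n → ∞, where the supremum is over all Borel probability measures μ on 𝕊¹. Equivalently, for every ε > 0 there exists n̄ = n̄(ε) such that for all n ≥ n̄ and all Borel probability measures μ, W(m, (1/n) Σ_{i=1}^{n} (R_α^i)_*μ) ≤ ε. -/

import Mathlib

/-!
For a continuous `g`, put `A g x = (1/n) ∑_{i=1}^n g (x + i α)`; then integrating `g` against the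
Cesàro average of `μ` amounts to integrating `A g` against `μ`, so it suffices to bound
`|∫ g dm - A g x|` by `ε`, uniformly in the point `x` and in the test function `g`.

For `g` bounded by `1` and `1`-Lipschitz, `A g` has two features with constants independent of `g`:
it is `1`-Lipschitz, and it is almost `R_α`-invariant, `|A g (x + k α) - A g x| ≤ 2 k / n`, because
the sum telescopes (`abs_birkhoff_shift_sub_le`). As the forward orbit of `0` is dense and the
circle is compact, for each `δ > 0` some `{0, α, …, K α}` is `δ`-dense (`exists_uniform_return`).
Hence the oscillation of `A g` is at most `2 K / n + δ`. Since `m` is invariant, the mean of `A g`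
is `∫ g dm`, so `A g` stays within `2 K / n + δ` of that number everywhere.
-/

open MeasureTheory Filter Topology

/-- The Wasserstein–Monge–Kantorovich (bounded-Lipschitz) distance between two Borel
measures on the circle `ℝ/ℤ`. -/
noncomputable def W (μ ν : Measure (AddCircle (1:ℝ))) : ℝ :=
  ⨆ g : {g : AddCircle (1:ℝ) → ℝ // LipschitzWith 1 g ∧ ∀ x, |g x| ≤ 1},
    |(∫ x, g.1 x ∂μ) - ∫ x, g.1 x ∂ν|

/-- The Cesàro average `(1/n) Σ_{i=1}^n (S^i)_* μ` of the pushforwards of `μ`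
under the iterates of `S`. -/
noncomputable def cesaroAvg (S : AddCircle (1:ℝ) → AddCircle (1:ℝ))
    (μ : Measure (AddCircle (1:ℝ))) (n : ℕ) : Measure (AddCircle (1:ℝ)) :=
  (n : ENNReal)⁻¹ • ∑ i ∈ Finset.range n, Measure.map (S^[i + 1]) μ

/-- Finitely many points of the forward orbit of `0` are `δ`-dense in the circle. -/
lemma exists_uniform_return {α : ℝ} (hα : Irrational α) {δ : ℝ} (hδ : 0 < δ) :
    ∃ K : ℕ, ∀ z : AddCircle (1:ℝ), ∃ k ≤ K, dist z (k • (α : AddCircle (1:ℝ))) < δ := by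
  have hd : Dense (Set.range fun k : ℕ => k • (α : AddCircle (1:ℝ))) := by
    have hz : DenseRange fun k : ℤ => k • (α : AddCircle (1:ℝ)) :=
      AddCircle.denseRange_zsmul_coe_iff.2 (by simpa using hα)
    rw [dense_iff_closure_eq, ← closure_range_zsmul_eq_nsmul]
    exact hz.closure_eq
  obtain ⟨K, hK⟩ := (isCompact_univ (X := AddCircle (1:ℝ))).elim_directed_cover
    (fun K : ℕ => ⋃ k ≤ K, Metric.ball (k • (α : AddCircle (1:ℝ))) δ)
    (fun K => isOpen_biUnion fun _ _ => Metric.isOpen_ball)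
    (fun z _ => by
      obtain ⟨_, ⟨k, rfl⟩, hk⟩ := hd.exists_dist_lt z hδ
      simp only [Set.mem_iUnion]
      exact ⟨k, k, le_rfl, hk⟩)
    (Monotone.directed_le fun K L hKL =>
      Set.biUnion_mono (fun k (hk : k ≤ K) => hk.trans hKL) fun _ _ => subset_rfl)
  refine ⟨K, fun z => ?_⟩
  simpa using hK (Set.mem_univ z)

/-- Birkhoff sums of a function bounded by `1` change by at most `2` under each application of
the rotation, whatever their length `n`. -/
lemma abs_birkhoff_shift_sub_le {g : AddCircle (1:ℝ) → ℝ} (hg : ∀ x, |g x| ≤ 1)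
    (a x : AddCircle (1:ℝ)) (n k : ℕ) :
    |(∑ i ∈ Finset.range n, g (x + k • a + (i + 1) • a)) -
      ∑ i ∈ Finset.range n, g (x + (i + 1) • a)| ≤ 2 * k := by
  induction k with
  | zero => simp
  | succ k ih =>
    have hstep : (∑ i ∈ Finset.range n, g (x + (k + 1) • a + (i + 1) • a)) -
        ∑ i ∈ Finset.range n, g (x + k • a + (i + 1) • a) =
        g (x + k • a + (n + 1) • a) - g (x + k • a + (0 + 1) • a) := by
      rw [← Finset.sum_range_sub (fun i => g (x + k • a + (i + 1) • a)) n,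
        ← Finset.sum_sub_distrib]
      refine Finset.sum_congr rfl fun i _ => ?_
      congr 2
      simp only [add_smul, one_smul]
      abel
    have h1 := abs_le.1 (hg (x + k • a + (n + 1) • a))
    have h2 := abs_le.1 (hg (x + k • a + (0 + 1) • a))
    have h3 := abs_le.1 ih
    push_cast
    rw [abs_le]
    constructor <;> linarith

/-- Birkhoff sums of a test function at two points differ by at most `2 K + n δ`. -/
lemma abs_birkhoff_sub_le {g : AddCircle (1:ℝ) → ℝ} (hL : LipschitzWith 1 g)
    (hg : ∀ x, |g x| ≤ 1) {a : AddCircle (1:ℝ)} {δ : ℝ} {K : ℕ}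
    (hK : ∀ z : AddCircle (1:ℝ), ∃ k ≤ K, dist z (k • a) < δ) (n : ℕ) (x y : AddCircle (1:ℝ)) :
    |(∑ i ∈ Finset.range n, g (y + (i + 1) • a)) -
      ∑ i ∈ Finset.range n, g (x + (i + 1) • a)| ≤ 2 * K + n * δ := by
  obtain ⟨k, hkK, hk⟩ := hK (y - x)
  have h1 := abs_birkhoff_shift_sub_le hg a x n k
  have h2 : |(∑ i ∈ Finset.range n, g (y + (i + 1) • a)) -
      ∑ i ∈ Finset.range n, g (x + k • a + (i + 1) • a)| ≤ n * δ := by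
    rw [← Finset.sum_sub_distrib]
    refine (Finset.abs_sum_le_sum_abs _ _).trans ?_
    refine (Finset.sum_le_card_nsmul _ _ δ fun i _ => ?_).trans (by simp)
    have h := hL.dist_le_mul (y + (i + 1) • a) (x + k • a + (i + 1) • a)
    rw [Real.dist_eq, dist_add_right, NNReal.coe_one, one_mul] at h
    have hxy : dist y (x + k • a) = dist (y - x) (k • a) := by
      rw [← dist_add_right (y - x) (k • a) x, sub_add_cancel, add_comm x]
    linarith
  have hkK' : (k : ℝ) ≤ K := by exact_mod_cast hkK
  calc _ ≤ _ := abs_sub_le _ (∑ i ∈ Finset.range n, g (x + k • a + (i + 1) • a)) _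
    _ ≤ _ := by linarith

lemma lipschitz_translate {g : AddCircle (1:ℝ) → ℝ} (hL : LipschitzWith 1 g)
    (b : AddCircle (1:ℝ)) : LipschitzWith 1 fun x => g (x + b) :=
  .of_dist_le_mul fun x y => by simpa using hL.dist_le_mul (x + b) (y + b)

lemma integrable_of_test {g : AddCircle (1:ℝ) → ℝ} (hL : LipschitzWith 1 g)
    (hg : ∀ x, |g x| ≤ 1) (μ : Measure (AddCircle (1:ℝ))) [IsFiniteMeasure μ] :
    Integrable g μ :=
  .of_bound hL.continuous.aestronglyMeasurable 1 (.of_forall hg)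

lemma integral_cesaroAvg {g : AddCircle (1:ℝ) → ℝ} (hL : LipschitzWith 1 g)
    (hg : ∀ x, |g x| ≤ 1) (a : AddCircle (1:ℝ)) (μ : Measure (AddCircle (1:ℝ)))
    [IsProbabilityMeasure μ] (n : ℕ) :
    ∫ x, g x ∂(cesaroAvg (fun x => x + a) μ n) =
      (n : ℝ)⁻¹ * ∫ x, ∑ i ∈ Finset.range n, g (x + (i + 1) • a) ∂μ := by
  have hm : ∀ b : AddCircle (1:ℝ), AEMeasurable (fun x => x + b) μ := fun b =>
    (continuous_id.add continuous_const).measurable.aemeasurable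
  have : ∀ b : AddCircle (1:ℝ), IsProbabilityMeasure (μ.map fun x => x + b) := fun b =>
    Measure.isProbabilityMeasure_map (hm b)
  unfold cesaroAvg
  simp only [add_right_iterate]
  rw [integral_smul_measure, integral_finsetSum_measure fun i _ => integrable_of_test hL hg _,
    integral_finsetSum _ fun i _ => integrable_of_test (lipschitz_translate hL _) (fun x => hg _) μ]
  simp only [ENNReal.toReal_inv, ENNReal.toReal_natCast, smul_eq_mul]
  congr 1
  refine Finset.sum_congr rfl fun i _ => ?_
  rw [integral_map (hm _) hL.continuous.aestronglyMeasurable]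

/-- The uniform estimate: the mean of the Birkhoff sum for Lebesgue measure is `n ∫ g dm` by
invariance, so the oscillation bound controls its distance to each value of the sum. -/
lemma abs_integral_sub_birkhoff_le {g : AddCircle (1:ℝ) → ℝ} (hL : LipschitzWith 1 g)
    (hg : ∀ x, |g x| ≤ 1) {a : AddCircle (1:ℝ)} {δ : ℝ} {K : ℕ}
    (hK : ∀ z : AddCircle (1:ℝ), ∃ k ≤ K, dist z (k • a) < δ) (n : ℕ) (x : AddCircle (1:ℝ)) :
    |n * (∫ y, g y) - ∑ i ∈ Finset.range n, g (x + (i + 1) • a)| ≤ 2 * K + n * δ := by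
  have : IsProbabilityMeasure (volume : Measure (AddCircle (1:ℝ))) := ⟨by simp⟩
  have hi : ∀ i ∈ Finset.range n,
      Integrable (fun y => g (y + (i + 1) • a)) (volume : Measure (AddCircle (1:ℝ))) :=
    fun i _ => integrable_of_test (lipschitz_translate hL _) (fun x => hg _) _
  have hmean : ∫ y, ∑ i ∈ Finset.range n, g (y + (i + 1) • a) = n * ∫ y, g y := by
    rw [integral_finsetSum _ hi]
    simp [integral_add_right_eq_self]
  have h := norm_integral_le_of_norm_le_const (μ := (volume : Measure (AddCircle (1:ℝ))))
    (f := fun y => (∑ i ∈ Finset.range n, g (y + (i + 1) • a)) -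
      ∑ i ∈ Finset.range n, g (x + (i + 1) • a))
    (.of_forall fun y => abs_birkhoff_sub_le hL hg hK n x y)
  rw [integral_sub (integrable_finsetSum _ hi) (integrable_const _), hmean] at h
  simpa using h

/-- For an irrational rotation `R_α` of the circle, the Cesàro averages of the
pushforwards of any Borel probability measure converge to Lebesgue measure in the `W`
distance, uniformly in the measure: for every `ε > 0` there is `n̄` such that for all
`n ≥ n̄` and all Borel probability measures `μ`,
`W(m, (1/n) Σ_{i=1}^n (R_α^i)_* μ) ≤ ε`. -/
theorem cesaro_uniform_convergence_irrational_rotation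
    (α : ℝ) (hα : Irrational α) :
    ∀ ε > (0:ℝ), ∃ nbar : ℕ, ∀ n ≥ nbar, ∀ μ : Measure (AddCircle (1:ℝ)),
      IsProbabilityMeasure μ →
      W volume (cesaroAvg (fun x => x + (α : AddCircle (1:ℝ))) μ n) ≤ ε := by
  intro ε hε
  obtain ⟨K, hK⟩ := exists_uniform_return hα (half_pos hε)
  -- `n ≥ 4 K / ε` makes the almost-invariance error `2 K / n` at most `ε / 2`.
  obtain ⟨N, hN⟩ := exists_nat_ge (4 * K / ε)
  refine ⟨N + 1, fun n hn μ hμ => Real.iSup_le (fun ⟨g, hL, hg⟩ => ?_) hε.le⟩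
  have hn0 : (0:ℝ) < n := by exact_mod_cast (show 0 < n by omega)
  have hNn : (N:ℝ) ≤ n := by exact_mod_cast (show N ≤ n by omega)
  have hKn : 4 * K ≤ n * ε := by
    rw [div_le_iff₀ hε] at hN
    nlinarith
  simp only
  rw [integral_cesaroAvg hL hg]
  have h := norm_integral_le_of_norm_le_const (μ := μ)
    (f := fun x => n * (∫ y, g y) - ∑ i ∈ Finset.range n, g (x + (i + 1) • (α : AddCircle (1:ℝ))))
    (.of_forall fun x => abs_integral_sub_birkhoff_le hL hg hK n x)
  rw [integral_sub (integrable_const _)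
    (integrable_finsetSum _ fun i _ => integrable_of_test (lipschitz_translate hL _) (fun x => hg _) μ)] at h
  simp only [integral_const, probReal_univ, smul_eq_mul, one_mul, mul_one, Real.norm_eq_abs] at h
  refine le_of_mul_le_mul_left ?_ hn0
  rw [← abs_of_pos hn0, ← abs_mul, abs_of_pos hn0, mul_sub, mul_inv_cancel_left₀ hn0.ne']
  linarith
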